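/- Let a_{ij} ∈ F for 0 ≤ i ≤ j ≤ r−1, let x * y = (1/2) Σ_{i≤j} a_{ij}(x^{p^i}y^{p^j} + x^{p^j}y^{p^i}), and let x ∘ y = (1/2) Σ_{i≤j} a_{ij}^{p^{r−i}} x^{p^{j−i}} y^{p^{r−i}} + (1/2) Σ_{i≤j} a_{ij}^{p^{r−j}} x^{p^{r+i−j}} y^{p^{r−j}} (exponents of p read modulo r). Then tr((1/2)·w·(w ∘ m)) = tr((1/2)·m·(w * w)) for all w, m ∈ F. In particular, the complete set of MUBs produced from the symplectic presemifield (F,+,∘) coincides with the one produced from the associated planar function of the commutative presemifield (F,+,*). -/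

import Mathlib

open scoped BigOperators

/-- The absolute trace of a finite field is invariant under powers of the Frobenius map. -/
theorem trace_pow_char_pow (p : ℕ) [Fact p.Prime] {F : Type*} [Field F] [Finite F]
    [Algebra (ZMod p) F] (n : ℕ) (x : F) :
    Algebra.trace (ZMod p) F (x ^ p ^ n) = Algebra.trace (ZMod p) F x := by
  induction n with
  | zero => simp
  | succ n ih =>
    rw [pow_succ, pow_mul, ← ih]
    have h := Algebra.trace_eq_of_algEquiv
      (FiniteField.frobeniusAlgEquivOfAlgebraic (ZMod p) F) (x ^ p ^ n)
    simpa [ZMod.card] using h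

/-- Powers of the Frobenius map fix `2⁻¹`. -/
theorem inv_two_pow_char_pow (p : ℕ) [Fact p.Prime] {F : Type*} [Field F] [CharP F p] (n : ℕ) :
    (2⁻¹ : F) ^ p ^ n = 2⁻¹ := by
  have h : iterateFrobenius F p n 2⁻¹ = 2⁻¹ := by rw [map_inv₀, map_ofNat]
  simpa [iterateFrobenius_def] using h

/-- In a field of order `p ^ r`, the exponent of `p` in a Frobenius power may be read modulo `r`. -/
theorem pow_char_pow_card_add {p r : ℕ} {F : Type*} [Field F] [Fintype F]
    (hcard : Fintype.card F = p ^ r) (k : ℕ) (x : F) : x ^ p ^ (r + k) = x ^ p ^ k := by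
  rw [pow_add, pow_mul, ← hcard, FiniteField.pow_card]

/-- A twisted monomial has the same absolute trace as its untwisted form. -/
theorem trace_twisted_monomial {p r : ℕ} [Fact p.Prime] {F : Type*} [Field F] [Fintype F]
    [CharP F p] [Algebra (ZMod p) F] (hcard : Fintype.card F = p ^ r)
    {k : ℕ} (hk : k ≤ r) (l : ℕ) (b w m : F) :
    Algebra.trace (ZMod p) F
        (2⁻¹ * w * (2⁻¹ * (b ^ p ^ (r - k) * w ^ p ^ l * m ^ p ^ (r - k)))) =
      Algebra.trace (ZMod p) F
        (2⁻¹ * m * (2⁻¹ * (b * (w ^ p ^ k * w ^ p ^ (l + k))))) := by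
  have hred (x : F) : (x ^ p ^ (r - k)) ^ p ^ k = x := by
    rw [← pow_mul, ← pow_add, Nat.sub_add_cancel hk, ← hcard, FiniteField.pow_card]
  rw [← trace_pow_char_pow p k]
  simp only [mul_pow, inv_two_pow_char_pow, hred]
  rw [← pow_mul w, ← pow_add]
  congr 1
  ring

/-- **Proposition.** Let `F = 𝔽_q`, `q = p^r` odd, let
`x * y = 2⁻¹ ∑_{i≤j} a i j (x^{p^i} y^{p^j} + x^{p^j} y^{p^i})` be the commutative
presemifield multiplication associated with the quadratic planar polynomial
`f(x) = ∑_{i≤j} a i j x^{p^i + p^j}`, and let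
`x ∘ y = 2⁻¹ ∑_{i≤j} a i j^{p^{r-i}} x^{p^{j-i}} y^{p^{r-i}}
       + 2⁻¹ ∑_{i≤j} a i j^{p^{r-j}} x^{p^{r+i-j}} y^{p^{r-j}}`
be the symplectic presemifield multiplication obtained by Knuth's cubical array method.
Then `tr (2⁻¹ w (w ∘ m)) = tr (2⁻¹ m (w * w))` for all `w m ∈ F`.  In particular, for a
primitive `p`-th root of unity `ω`, the complete set of MUBs produced from `(F, +, ∘)`
coincides with the one produced from the planar function of `(F, +, *)`: the defining
vectors are literally equal. -/
theorem knuth_symplectic_mub_eq_commutative_mub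
    (p r : ℕ) [Fact p.Prime] (hp : Odd p) (hr : 0 < r)
    (F : Type*) [Field F] [Fintype F] [CharP F p] [Algebra (ZMod p) F]
    (hcard : Fintype.card F = p ^ r)
    (ω : ℂ) (hω : IsPrimitiveRoot ω p)
    (a : Fin r → Fin r → F)
    (cmul : F → F → F)
    (hcmul : ∀ x y : F, cmul x y =
      (2⁻¹ : F) * ∑ i : Fin r, ∑ j : Fin r, if i ≤ j then
          a i j * (x ^ p ^ (i : ℕ) * y ^ p ^ (j : ℕ) + x ^ p ^ (j : ℕ) * y ^ p ^ (i : ℕ))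
        else 0)
    (circ : F → F → F)
    (hcirc : ∀ x y : F, circ x y =
      (2⁻¹ : F) * (∑ i : Fin r, ∑ j : Fin r, if i ≤ j then
          a i j ^ p ^ (r - (i : ℕ)) * x ^ p ^ ((j : ℕ) - (i : ℕ)) * y ^ p ^ (r - (i : ℕ))
        else 0) +
      (2⁻¹ : F) * (∑ i : Fin r, ∑ j : Fin r, if i ≤ j then
          a i j ^ p ^ (r - (j : ℕ)) * x ^ p ^ (r + (i : ℕ) - (j : ℕ)) * y ^ p ^ (r - (j : ℕ))
        else 0)) :
    (∀ w m : F,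
      Algebra.trace (ZMod p) F ((2⁻¹ : F) * w * circ w m) =
        Algebra.trace (ZMod p) F ((2⁻¹ : F) * m * cmul w w)) ∧
    (∀ m v : F,
      (fun w : F => ω ^ (Algebra.trace (ZMod p) F ((2⁻¹ : F) * w * circ w m + v * w)).val) =
      (fun w : F => ω ^ (Algebra.trace (ZMod p) F ((2⁻¹ : F) * m * cmul w w + v * w)).val)) := by
  have key (w m : F) : Algebra.trace (ZMod p) F ((2⁻¹ : F) * w * circ w m) =
      Algebra.trace (ZMod p) F ((2⁻¹ : F) * m * cmul w w) := by
    rw [hcmul, hcirc, ← mul_add, ← Finset.sum_add_distrib]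
    simp only [← Finset.sum_add_distrib, Finset.mul_sum, map_sum]
    refine Finset.sum_congr rfl fun i _ => Finset.sum_congr rfl fun j _ => ?_
    split_ifs with hij
    · have hij' : (i : ℕ) ≤ j := hij
      simp only [mul_add, map_add]
      rw [trace_twisted_monomial hcard i.isLt.le, trace_twisted_monomial hcard j.isLt.le,
        Nat.sub_add_cancel hij', Nat.sub_add_cancel (by omega : (j : ℕ) ≤ r + i),
        pow_char_pow_card_add hcard]
    · simp
  refine ⟨key, fun m v => funext fun w => ?_⟩
  rw [map_add, map_add, key]
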